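/- arXiv:1304.3918 — 2 statements merged into one kernel-verified Lean document; each statement's English description precedes it below -/
import Mathlib

section
/- Let N ≥ 3, μ ∈ ℝ and σ > 0. Let a be a strictly upper-triangular real N×N matrix with ∑_{1 ≤ i < j ≤ N} a_{ij} = 0, and suppose that for every ξ ≠ 0 the function g ↦ ∑_{1 ≤ i < j ≤ N} a_{ij}·log(u_ξ(g_i) − u_ξ(g_j)) is Lebesgue integrable on the simplex Δ_N and satisfies N! · ∫_{Δ_N} ∑_{1 ≤ i < j ≤ N} a_{ij}·log(u_ξ(g_i) − u_ξ(g_j)) dg = ξ. Then a lies in the real linear span of the elemental weight matrices {E^{(I,J)} : 1 ≤ I, I+2 ≤ J ≤ N}. That is, every location- and scale-invariant, absolutely unbiased estimator of the GPD tail parameter that is a linear combination of log-spacings is a linear combination of elementals. -/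
open MeasureTheory Real Set

/-- The GPD tail-quantile function: `u_ξ(t) = μ + (σ/ξ)(t^{-ξ} - 1)` for `ξ ≠ 0`,
and `u_0(t) = μ - σ log t`. -/
noncomputable def gpdQ (μ σ ξ : ℝ) (t : ℝ) : ℝ :=
  if ξ = 0 then μ - σ * Real.log t else μ + σ / ξ * (t ^ (-ξ) - 1)

/-- The open simplex `Δ_N = {g : 0 < g 1 < ⋯ < g N < 1}` in `ℝ^N`. -/
def simplex (n : ℕ) : Set (Fin n → ℝ) :=
  {g | StrictMono g ∧ ∀ i, 0 < g i ∧ g i < 1}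

/-- The data tuple `X_i = u(g_i)` (1-based indexing: `sample n u g i = u (g_{i-1})`,
for `1 ≤ i ≤ n`; junk value `0` outside this range). -/
noncomputable def sample (n : ℕ) (u : ℝ → ℝ) (g : Fin n → ℝ) : ℕ → ℝ :=
  fun i => if h : i - 1 < n then u (g ⟨i - 1, h⟩) else 0

/-- The elemental weight matrix `E^{(I,J)}` (as a function `ℕ → ℕ → ℝ` with 1-based
indices): its only nonzero entries are `E_{I,J−1} = J−1`, `E_{I,J} = −(J−1−I)` and
`E_{I+1,J} = −I`. -/
noncomputable def elemMatrix (I J : ℕ) : ℕ → ℕ → ℝ := fun i j =>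
  if i = I ∧ j = J - 1 then (J : ℝ) - 1
  else if i = I ∧ j = J then -((J : ℝ) - 1 - (I : ℝ))
  else if i = I + 1 ∧ j = J then -(I : ℝ)
  else 0

/- On the simplex, for `ξ > 0` and `i < j`,
`log (u_ξ(g_i) - u_ξ(g_j)) = log (σ / ξ) - ξ log g_i + log (1 - (g_i / g_j) ^ ξ)`.
Expanding the last logarithm into its power series, its mean is `-T_{ij}(ξ)`, where
`T_{ij}(ξ) = ∑ k, E[(g_i / g_j) ^ ((k + 1) ξ)] / (k + 1)` tends to `0` as `ξ → ∞`, so the mean of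
the estimator is `(∑ a_{ij}) log (σ / ξ) - Λ ξ - ∑ a_{ij} T_{ij}(ξ)` with `Λ` independent of `ξ`.
Unbiasedness thus forces `∑ a_{ij} T_{ij}(ξ) = 0` for arbitrarily large `ξ`, by comparing orders of
growth.

The moments of the ratios satisfy `j T_{ij} = (j - i) T_{i,j+1} + i T_{i+1,j+1}`, which says that
elementals annihilate `T`. Modulo elementals every weight matrix is supported on the last column,
and there `T_{1N} ≪ T_{2N} ≪ ⋯ ≪ T_{N-1,N}` as `ξ → ∞`, so that all its entries vanish. -/

open Filter Asymptotics Topology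
open scoped ENNReal

theorem eq_zero_of_frequently_add_const_mul_eq_zero {α : Type*} {l : Filter α} {f g : α → ℝ}
    {c : ℝ} (hfg : f =o[l] g) (hg : ∀ᶠ x in l, g x ≠ 0) (h : ∃ᶠ x in l, f x + c * g x = 0) :
    c = 0 := by
  by_contra hc
  obtain ⟨x, hx, hgx, hfx⟩ :=
    (h.and_eventually (hg.and (hfg.def (half_pos (norm_pos_iff.2 hc))))).exists
  have hgx_pos : 0 < ‖c‖ * ‖g x‖ := mul_pos (norm_pos_iff.2 hc) (norm_pos_iff.2 hgx)
  rw [eq_neg_of_add_eq_zero_left hx, norm_neg, norm_mul] at hfx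
  linarith

theorem eq_zero_of_frequently_sum_mul_eq_zero {α ι : Type*} [LinearOrder ι] {l : Filter α}
    {f : ι → α → ℝ} {b : ι → ℝ} (s : Finset ι)
    (hf : ∀ i ∈ s, ∀ j ∈ s, i < j → f i =o[l] f j) (hf_ne : ∀ i ∈ s, ∀ᶠ x in l, f i x ≠ 0)
    (h : ∃ᶠ x in l, ∑ i ∈ s, b i * f i x = 0) : ∀ i ∈ s, b i = 0 := by
  induction s using Finset.induction_on_max with
  | empty => simp
  | insert m s hm ih =>
    have hm_notMem : m ∉ s := fun hms => lt_irrefl m (hm m hms)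
    simp only [Finset.sum_insert hm_notMem] at h
    have hlower : (fun x => ∑ i ∈ s, b i * f i x) =o[l] f m := .fun_sum fun i hi =>
      (hf i (Finset.mem_insert_of_mem hi) m (Finset.mem_insert_self m s)
        (hm i hi)).const_mul_left (b i)
    have hbm : b m = 0 := eq_zero_of_frequently_add_const_mul_eq_zero hlower
      (hf_ne m (Finset.mem_insert_self m s)) (h.mono fun x hx => by rw [add_comm, hx])
    have hb := ih
      (fun i hi j hj => hf i (Finset.mem_insert_of_mem hi) j (Finset.mem_insert_of_mem hj))
      (fun i hi => hf_ne i (Finset.mem_insert_of_mem hi))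
      (h.mono fun x hx => by simpa only [hbm, zero_mul, zero_add] using hx)
    exact (Finset.forall_mem_insert ..).2 ⟨hbm, hb⟩

theorem coeffs_eq_zero_of_frequently_add_log_add_linear {R : ℝ → ℝ}
    {σ B A : ℝ} (hσ : 0 < σ) (hR : Tendsto R atTop (𝓝 0))
    (h : ∃ᶠ ξ in atTop, R ξ + B * Real.log (ξ / σ) + A * ξ = 0) : B = 0 ∧ A = 0 := by
  have hscale : Tendsto (fun ξ : ℝ => ξ / σ) atTop atTop := tendsto_id.atTop_div_const hσ
  have hlog_atTop : Tendsto (fun ξ => Real.log (ξ / σ)) atTop atTop :=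
    tendsto_log_atTop.comp hscale
  have hlog_id : (fun ξ => Real.log (ξ / σ)) =o[atTop] fun ξ : ℝ => ξ :=
    (isLittleO_log_id_atTop.comp_tendsto hscale).trans_isBigO (by
      simpa only [div_eq_mul_inv, mul_comm] using!
        (isBigO_refl (fun ξ : ℝ => ξ) atTop).const_mul_left σ⁻¹)
  have hR_log : R =o[atTop] fun ξ => Real.log (ξ / σ) :=
    (hR.isBigO_one ℝ).trans_isLittleO
      ((isLittleO_one_left_iff ℝ).2 (tendsto_norm_atTop_atTop.comp hlog_atTop))
  have hA : A = 0 := eq_zero_of_frequently_add_const_mul_eq_zero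
    ((hR_log.trans hlog_id).add (hlog_id.const_mul_left B)) (eventually_ne_atTop 0) h
  refine ⟨eq_zero_of_frequently_add_const_mul_eq_zero hR_log
    (hlog_atTop.eventually_ne_atTop 0) (h.mono fun ξ hξ => ?_), hA⟩
  rwa [hA, zero_mul, add_zero] at hξ

/-- The open simplex of strictly increasing `n`-tuples in `(0, t)`. For `t ∈ (0, 1)` it is the slice
of `simplex (n + 1)` with last coordinate `t`. -/
def simplexBelow (n : ℕ) (t : ℝ) : Set (Fin n → ℝ) :=
  {g | StrictMono g ∧ ∀ i, 0 < g i ∧ g i < t}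

theorem simplexBelow_one (n : ℕ) : simplexBelow n 1 = simplex n := rfl

theorem simplexBelow_zero (t : ℝ) : simplexBelow 0 t = univ :=
  eq_univ_of_forall fun _ => ⟨fun i => i.elim0, fun i => i.elim0⟩

theorem measurableSet_simplexBelow (n : ℕ) (t : ℝ) : MeasurableSet (simplexBelow n t) := by
  have hset : simplexBelow n t =
      (⋂ (i : Fin n) (j : Fin n) (_ : i < j), {g | g i < g j}) ∩
        ⋂ i : Fin n, {g | 0 < g i ∧ g i < t} := by
    ext g
    simp [simplexBelow, StrictMono]
  rw [hset]
  measurability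

theorem measurableSet_simplex (n : ℕ) : MeasurableSet (simplex n) :=
  measurableSet_simplexBelow n 1

theorem snoc_mem_simplexBelow {n : ℕ} {t x : ℝ} {h : Fin n → ℝ} :
    (Fin.snoc h x : Fin (n + 1) → ℝ) ∈ simplexBelow (n + 1) t ↔
      x ∈ Ioo 0 t ∧ h ∈ simplexBelow n x := by
  simp only [simplexBelow, mem_ofPred_eq, StrictMono, Fin.forall_fin_succ', Fin.snoc_castSucc,
    Fin.snoc_last, Fin.castSucc_lt_castSucc_iff, Fin.castSucc_lt_last, mem_Ioo]
  constructor
  · rintro ⟨⟨hmono, -⟩, hh, hx⟩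
    exact ⟨hx, fun i j hij => (hmono i).1 j hij, fun i => ⟨(hh i).1, (hmono i).2 trivial⟩⟩
  · rintro ⟨hx, hmono, hh⟩
    refine ⟨⟨fun i => ⟨fun j hij => hmono hij, fun _ => (hh i).2⟩, ?_⟩,
      fun i => ⟨(hh i).1, (hh i).2.trans hx.2⟩, hx⟩
    exact ⟨fun i hi => absurd hi (Fin.le_last _).not_gt, fun h => absurd h (lt_irrefl _)⟩

theorem lintegral_fin_snoc {n : ℕ} {F : (Fin (n + 1) → ℝ) → ℝ≥0∞} (hF : Measurable F) :
    ∫⁻ g, F g = ∫⁻ x, ∫⁻ h : Fin n → ℝ, F (Fin.snoc h x) := by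
  let split := MeasurableEquiv.piFinSuccAbove (fun _ : Fin (n + 1) => ℝ) (Fin.last n)
  have hsplit : MeasurePreserving split.symm :=
    (volume_preserving_piFinSuccAbove (fun _ => ℝ) (Fin.last n)).symm
  rw [← hsplit.lintegral_comp hF, Measure.volume_eq_prod,
    lintegral_prod (fun p => F (split.symm p)) (hF.comp hsplit.measurable).aemeasurable]
  simp_rw [← Fin.insertNth_last']
  rfl

theorem setLIntegral_simplexBelow_succ {n : ℕ} {t : ℝ} {F : (Fin (n + 1) → ℝ) → ℝ≥0∞}
    (hF : Measurable F) :
    ∫⁻ g in simplexBelow (n + 1) t, F g =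
      ∫⁻ x in Ioo 0 t, ∫⁻ h in simplexBelow n x, F (Fin.snoc h x) := by
  classical
  rw [← lintegral_indicator (measurableSet_simplexBelow _ _),
    lintegral_fin_snoc (hF.indicator (measurableSet_simplexBelow _ _)),
    ← lintegral_indicator measurableSet_Ioo]
  refine lintegral_congr fun x => ?_
  by_cases hx : x ∈ Ioo 0 t
  · rw [indicator_of_mem hx, ← lintegral_indicator (measurableSet_simplexBelow _ _)]
    simp only [indicator_apply, snoc_mem_simplexBelow, hx, true_and]
  · simp only [indicator_apply, snoc_mem_simplexBelow, hx, false_and, if_false, lintegral_zero]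

theorem lintegral_Ioo_rpow {t p : ℝ} (ht : 0 < t) (hp : -1 < p) :
    ∫⁻ x in Ioo 0 t, ENNReal.ofReal (x ^ p) = ENNReal.ofReal (t ^ (p + 1) / (p + 1)) := by
  have hnonneg : ∀ᵐ x ∂volume.restrict (Ioo 0 t), 0 ≤ x ^ p :=
    ae_restrict_of_forall_mem measurableSet_Ioo fun x hx => rpow_nonneg hx.1.le p
  rw [← ofReal_integral_eq_lintegral_ofReal
    ((intervalIntegral.integrableOn_Ioo_rpow_iff ht).2 hp) hnonneg, ← integral_Ioc_eq_integral_Ioo,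
    ← intervalIntegral.integral_of_le ht.le, integral_rpow (Or.inl hp),
    zero_rpow (by linarith), sub_zero]

-- Integrating out the largest coordinate `x` leaves the same integral over `simplexBelow n x`.
theorem lintegral_simplexBelow_prod_rpow {e : ℕ → ℝ} {n : ℕ} {t : ℝ}
    (he : ∀ k ∈ Finset.range n, 0 < ∑ l ∈ Finset.range (k + 1), (e l + 1)) (ht : 0 < t) :
    ∫⁻ g in simplexBelow n t, ENNReal.ofReal (∏ k : Fin n, g k ^ e k) =
      ENNReal.ofReal (t ^ (∑ l ∈ Finset.range n, (e l + 1)) *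
        ∏ k ∈ Finset.range n, (∑ l ∈ Finset.range (k + 1), (e l + 1))⁻¹) := by
  induction n generalizing t with
  | zero => simp [simplexBelow_zero, volume_pi]
  | succ n ih =>
    have hn := he n (Finset.self_mem_range_succ n)
    have he' := fun k hk => he k (Finset.range_subset_range.2 n.le_succ hk)
    rw [Finset.sum_range_succ] at hn
    set C := ∏ k ∈ Finset.range n, (∑ l ∈ Finset.range (k + 1), (e l + 1))⁻¹
    set S := ∑ l ∈ Finset.range n, (e l + 1)
    have hC : 0 ≤ C := Finset.prod_nonneg fun k hk => (inv_pos.2 (he' k hk)).le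
    have hinner : ∀ x ∈ Ioo 0 t, ∫⁻ h in simplexBelow n x,
        ENNReal.ofReal (∏ k : Fin (n + 1), (Fin.snoc h x : Fin (n + 1) → ℝ) k ^ e k) =
          ENNReal.ofReal C * ENNReal.ofReal (x ^ (S + e n)) := by
      intro x hx
      simp only [Fin.prod_univ_castSucc, Fin.snoc_castSucc, Fin.snoc_last, Fin.val_castSucc,
        Fin.val_last]
      simp_rw [ENNReal.ofReal_mul' (rpow_nonneg hx.1.le (e n))]
      rw [lintegral_mul_const' _ _ ENNReal.ofReal_ne_top, ih he' hx.1,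
        ← ENNReal.ofReal_mul' (rpow_nonneg hx.1.le _), ← ENNReal.ofReal_mul hC, rpow_add hx.1]
      ring_nf
    rw [setLIntegral_simplexBelow_succ (by fun_prop),
      setLIntegral_congr_fun measurableSet_Ioo hinner,
      lintegral_const_mul' _ _ ENNReal.ofReal_ne_top, lintegral_Ioo_rpow ht (by linarith),
      ← ENNReal.ofReal_mul hC, Finset.prod_range_succ, Finset.sum_range_succ, add_assoc]
    congr 1
    ring

theorem ae_simplex_prod_rpow_nonneg (e : ℕ → ℝ) (n : ℕ) :
    0 ≤ᵐ[volume.restrict (simplex n)] fun g => ∏ k : Fin n, g k ^ e k :=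
  ae_restrict_of_forall_mem (measurableSet_simplex n) fun _ hg =>
    Finset.prod_nonneg fun k _ => rpow_nonneg (hg.2 k).1.le _

theorem integrableOn_simplex_prod_rpow {e : ℕ → ℝ} {n : ℕ}
    (he : ∀ k ∈ Finset.range n, 0 < ∑ l ∈ Finset.range (k + 1), (e l + 1)) :
    IntegrableOn (fun g => ∏ k : Fin n, g k ^ e k) (simplex n) := by
  refine ⟨Measurable.aestronglyMeasurable (by fun_prop), ?_⟩
  rw [hasFiniteIntegral_iff_ofReal, ← simplexBelow_one, lintegral_simplexBelow_prod_rpow he one_pos]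
  · exact ENNReal.ofReal_lt_top
  · exact ae_simplex_prod_rpow_nonneg e n

theorem integral_simplex_prod_rpow {e : ℕ → ℝ} {n : ℕ}
    (he : ∀ k ∈ Finset.range n, 0 < ∑ l ∈ Finset.range (k + 1), (e l + 1)) :
    ∫ g in simplex n, ∏ k : Fin n, g k ^ e k =
      ∏ k ∈ Finset.range n, (∑ l ∈ Finset.range (k + 1), (e l + 1))⁻¹ := by
  rw [integral_eq_lintegral_of_nonneg_ae, ← simplexBelow_one,
    lintegral_simplexBelow_prod_rpow he one_pos, one_rpow, one_mul, ENNReal.toReal_ofReal]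
  · exact Finset.prod_nonneg fun k hk => (inv_pos.2 (he k hk)).le
  · exact ae_simplex_prod_rpow_nonneg e n
  · exact Measurable.aestronglyMeasurable (by fun_prop)

theorem integrableOn_simplex_log {N : ℕ} (i : Fin N) :
    IntegrableOn (fun g => Real.log (g i)) (simplex N) := by
  let e : ℕ → ℝ := fun l => if l = i then -(1 / 2) else 0
  have he : ∀ k ∈ Finset.range N, 0 < ∑ l ∈ Finset.range (k + 1), (e l + 1) := fun k _ =>
    Finset.sum_pos (fun l _ => by dsimp only [e]; split_ifs <;> norm_num)
      Finset.nonempty_range_add_one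
  refine ((integrableOn_simplex_prod_rpow he).const_mul 2).mono'
    (Measurable.aestronglyMeasurable (by fun_prop)) ?_
  refine ae_restrict_of_forall_mem (measurableSet_simplex N) fun g hg => ?_
  obtain ⟨hpos, hlt⟩ := hg.2 i
  have hprod : ∏ k : Fin N, g k ^ e k = g i ^ (-(1 / 2) : ℝ) := by
    rw [Finset.prod_eq_single i]
    · simp [e]
    · intro k _ hki
      simp [e, Fin.val_ne_of_ne hki]
    · simp
  have hlog := (abs_log_mul_self_rpow_lt (g i) (1 / 2) hpos hlt.le one_half_pos).le
  rw [abs_mul, abs_of_pos (rpow_pos_of_pos hpos _), one_div_one_div] at hlog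
  rwa [hprod, norm_eq_abs, rpow_neg hpos.le, ← div_eq_mul_inv, le_div_iff₀ (rpow_pos_of_pos hpos _)]

/-- The `s`-th moment of `g_i / g_j`, for `i < j` and `g` the increasing order statistics of an
i.i.d. uniform sample. The indices are 1-based; the sample size does not enter. -/
noncomputable def ratioMoment (i j : ℕ) (s : ℝ) : ℝ :=
  ∏ l ∈ Finset.Ico i j, (l : ℝ) / (l + s)

theorem ratioMoment_nonneg (i j : ℕ) {s : ℝ} (hs : 0 ≤ s) : 0 ≤ ratioMoment i j s :=
  Finset.prod_nonneg fun _ _ => by positivity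

theorem ratioMoment_pos {i : ℕ} (hi : 1 ≤ i) (j : ℕ) {s : ℝ} (hs : 0 ≤ s) :
    0 < ratioMoment i j s :=
  Finset.prod_pos fun l hl => by
    have : 0 < l := hi.trans (Finset.mem_Ico.1 hl).1
    positivity

theorem ratioMoment_le_one (i j : ℕ) {s : ℝ} (hs : 0 ≤ s) : ratioMoment i j s ≤ 1 :=
  Finset.prod_le_one (fun _ _ => by positivity) fun _ _ =>
    div_le_one_of_le₀ (by linarith) (by positivity)

theorem ratioMoment_eq_mul_succ_left {i j : ℕ} (hij : i < j) (s : ℝ) :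
    ratioMoment i j s = i / (i + s) * ratioMoment (i + 1) j s :=
  Finset.prod_eq_prod_Ico_succ_bot hij _

theorem ratioMoment_succ_right {i j : ℕ} (hij : i ≤ j) (s : ℝ) :
    ratioMoment i (j + 1) s = ratioMoment i j s * (j / (j + s)) :=
  Finset.prod_Ico_succ_top hij _

theorem ratioMoment_le_div {i j : ℕ} (hij : i < j) {s : ℝ} (hs : 0 < s) :
    ratioMoment i j s ≤ i / s :=
  calc ratioMoment i j s = i / (i + s) * ratioMoment (i + 1) j s :=
        ratioMoment_eq_mul_succ_left hij s
    _ ≤ i / (i + s) := mul_le_of_le_one_right (by positivity) (ratioMoment_le_one _ _ hs.le)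
    _ ≤ i / s := by gcongr; linarith [Nat.cast_nonneg (α := ℝ) i]

theorem ratioMoment_recurrence {i j : ℕ} (hij : i < j) {s : ℝ} (hs : 0 < s) :
    j * ratioMoment i j s =
      (j - i) * ratioMoment i (j + 1) s + i * ratioMoment (i + 1) (j + 1) s := by
  rw [ratioMoment_succ_right hij.le, ratioMoment_succ_right hij, ratioMoment_eq_mul_succ_left hij]
  field

/-- The exponents `e` for which `(g_i / g_j) ^ s` is the monomial `∏ g_k ^ e k`. The indices are
0-based here, as those of `Fin N`. -/
noncomputable def ratioExponent (i j : ℕ) (s : ℝ) (l : ℕ) : ℝ :=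
  (if l = i then s else 0) - if l = j then s else 0

theorem sum_ratioExponent {i j : ℕ} (hij : i < j) (s : ℝ) (k : ℕ) :
    ∑ l ∈ Finset.range (k + 1), (ratioExponent i j s l + 1) =
      if k ∈ Finset.Ico i j then (k : ℝ) + 1 + s else k + 1 := by
  simp only [ratioExponent, Finset.sum_add_distrib, Finset.sum_sub_distrib, Finset.sum_ite_eq',
    Finset.sum_const, Finset.card_range, Finset.mem_range, Finset.mem_Ico, nsmul_eq_mul, mul_one]
  split_ifs <;> first | omega | (push_cast; ring)

theorem sum_ratioExponent_pos {i j : ℕ} (hij : i < j) {s : ℝ} (hs : 0 ≤ s) (k : ℕ) :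
    0 < ∑ l ∈ Finset.range (k + 1), (ratioExponent i j s l + 1) := by
  rw [sum_ratioExponent hij]
  split_ifs <;> positivity

theorem prod_rpow_ratioExponent {N : ℕ} {i j : Fin N} (s : ℝ) {g : Fin N → ℝ}
    (hg : ∀ k, 0 < g k) :
    ∏ k : Fin N, g k ^ ratioExponent i j s k = (g i / g j) ^ s := by
  have hpow (i : Fin N) : ∏ k : Fin N, g k ^ (if (k : ℕ) = i then s else 0) = g i ^ s := by
    simp [Fin.val_inj, apply_ite]
  simp only [ratioExponent, rpow_sub (hg _), Finset.prod_div_distrib, hpow]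
  rw [div_rpow (hg i).le (hg j).le]

theorem prod_inv_sum_ratioExponent {N i j : ℕ} (hij : i < j) (hjN : j < N) (s : ℝ) :
    ∏ k ∈ Finset.range N, (∑ l ∈ Finset.range (k + 1), (ratioExponent i j s l + 1))⁻¹ =
      ratioMoment (i + 1) (j + 1) s / N.factorial := by
  have hfactor (k : ℕ) : (∑ l ∈ Finset.range (k + 1), (ratioExponent i j s l + 1))⁻¹ =
      (if k ∈ Finset.Ico i j then ((k + 1 : ℕ) : ℝ) / ((k + 1 : ℕ) + s) else 1) /
        ((k + 1 : ℕ) : ℝ) := by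
    rw [sum_ratioExponent hij]
    split_ifs <;> push_cast <;> field
  have hsub : Finset.range N ∩ Finset.Ico i j = Finset.Ico i j :=
    Finset.inter_eq_right.2 fun k hk =>
      Finset.mem_range.2 ((Finset.mem_Ico.1 hk).2.trans hjN)
  simp_rw [hfactor]
  rw [Finset.prod_div_distrib, Finset.prod_ite_mem, hsub, ← Nat.cast_prod,
    Finset.prod_range_add_one_eq_factorial,
    Finset.prod_Ico_add' (fun l : ℕ => (l : ℝ) / (l + s)) i j 1, ratioMoment]

section RatioIntegral

variable {N : ℕ} {i j : Fin N} {s : ℝ}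

theorem integrableOn_simplex_ratio_rpow (hij : i < j) (hs : 0 ≤ s) :
    IntegrableOn (fun g => (g i / g j) ^ s) (simplex N) :=
  (integrableOn_simplex_prod_rpow fun k _ => sum_ratioExponent_pos hij hs k).congr_fun
    (fun _ hg => prod_rpow_ratioExponent s fun k => (hg.2 k).1) (measurableSet_simplex N)

theorem integral_simplex_ratio_rpow (hij : i < j) (hs : 0 ≤ s) :
    ∫ g in simplex N, (g i / g j) ^ s = ratioMoment (i + 1) (j + 1) s / N.factorial := by
  rw [← prod_inv_sum_ratioExponent hij j.isLt,
    ← integral_simplex_prod_rpow fun k _ => sum_ratioExponent_pos hij hs k]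
  exact setIntegral_congr_fun (measurableSet_simplex N) fun _ hg =>
    (prod_rpow_ratioExponent s fun k => (hg.2 k).1).symm

end RatioIntegral

section NegLogMoment

/-- The mean of `-log (1 - (g_i / g_j) ^ ξ)`, for `i < j` and `g` the increasing order statistics
of an i.i.d. uniform sample, as the term-by-term mean of the logarithmic series. The indices are
1-based, as in `ratioMoment`. -/
noncomputable def negLogMoment (i j : ℕ) (ξ : ℝ) : ℝ :=
  ∑' k : ℕ, ratioMoment i j ((k + 1) * ξ) / (k + 1)

variable {i j : ℕ} {ξ : ℝ}

theorem negLogMoment_term_le (hij : i < j) (hξ : 0 < ξ) (k : ℕ) :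
    ratioMoment i j ((k + 1) * ξ) / (k + 1) ≤ i / ξ * (1 / ((k : ℝ) + 1) ^ 2) :=
  calc ratioMoment i j ((k + 1) * ξ) / (k + 1) ≤ i / ((k + 1) * ξ) / (k + 1) := by
        gcongr
        exact ratioMoment_le_div hij (by positivity)
    _ = i / ξ * (1 / ((k : ℝ) + 1) ^ 2) := by field

theorem summable_one_div_nat_add_one_sq : Summable fun k : ℕ => 1 / ((k : ℝ) + 1) ^ 2 := by
  simpa using (summable_nat_add_iff 1).2 (summable_one_div_nat_pow.2 one_lt_two)

theorem summable_negLogMoment (hij : i < j) (hξ : 0 < ξ) :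
    Summable fun k : ℕ => ratioMoment i j ((k + 1) * ξ) / (k + 1) :=
  .of_nonneg_of_le
    (fun _ => div_nonneg (ratioMoment_nonneg i j (by positivity)) (by positivity))
    (negLogMoment_term_le hij hξ) (summable_one_div_nat_add_one_sq.mul_left _)

theorem negLogMoment_nonneg (i j : ℕ) (hξ : 0 ≤ ξ) : 0 ≤ negLogMoment i j ξ :=
  tsum_nonneg fun _ => div_nonneg (ratioMoment_nonneg i j (by positivity)) (by positivity)

theorem negLogMoment_pos (hi : 1 ≤ i) (hij : i < j) (hξ : 0 < ξ) : 0 < negLogMoment i j ξ :=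
  (summable_negLogMoment hij hξ).tsum_pos
    (fun _ => div_nonneg (ratioMoment_nonneg i j (by positivity)) (by positivity)) 0
    (div_pos (ratioMoment_pos hi j (by positivity)) (by positivity))

theorem negLogMoment_recurrence (hij : i < j) (hξ : 0 < ξ) :
    j * negLogMoment i j ξ =
      (j - i) * negLogMoment i (j + 1) ξ + i * negLogMoment (i + 1) (j + 1) ξ := by
  have hi := (summable_negLogMoment (hij.trans j.lt_succ_self) hξ).mul_left ((j : ℝ) - i)
  have hi' := (summable_negLogMoment (Nat.succ_lt_succ hij) hξ).mul_left (i : ℝ)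
  simp only [negLogMoment, ← tsum_mul_left]
  rw [← hi.tsum_add hi']
  refine tsum_congr fun k => ?_
  rw [← mul_div_assoc, ratioMoment_recurrence hij (by positivity)]
  ring

theorem negLogMoment_le_mul_succ_left (hij : i + 1 < j) (hξ : 0 < ξ) :
    negLogMoment i j ξ ≤ i / ξ * negLogMoment (i + 1) j ξ := by
  simp only [negLogMoment, ← tsum_mul_left]
  refine (summable_negLogMoment (by omega) hξ).tsum_le_tsum (fun k => ?_)
    ((summable_negLogMoment hij hξ).mul_left _)
  rw [ratioMoment_eq_mul_succ_left (by omega), mul_div_assoc]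
  have hmoment : 0 ≤ ratioMoment (i + 1) j ((k + 1) * ξ) :=
    ratioMoment_nonneg _ _ (by positivity)
  gcongr
  nlinarith [Nat.cast_nonneg (α := ℝ) i, mul_nonneg (Nat.cast_nonneg (α := ℝ) k) hξ.le]

theorem negLogMoment_isBigO_inv (hij : i < j) : negLogMoment i j =O[atTop] fun ξ => ξ⁻¹ := by
  refine .of_bound (i * ∑' k : ℕ, 1 / ((k : ℝ) + 1) ^ 2) ?_
  filter_upwards [eventually_gt_atTop 0] with ξ hξ
  rw [norm_of_nonneg (negLogMoment_nonneg i j hξ.le), norm_of_nonneg (by positivity)]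
  calc negLogMoment i j ξ ≤ ∑' k : ℕ, i / ξ * (1 / ((k : ℝ) + 1) ^ 2) :=
        (summable_negLogMoment hij hξ).tsum_le_tsum (negLogMoment_term_le hij hξ)
          (summable_one_div_nat_add_one_sq.mul_left _)
    _ = (i * ∑' k : ℕ, 1 / ((k : ℝ) + 1) ^ 2) * ξ⁻¹ := by
        rw [tsum_mul_left]
        ring

theorem tendsto_negLogMoment (hij : i < j) : Tendsto (negLogMoment i j) atTop (𝓝 0) :=
  (negLogMoment_isBigO_inv hij).trans_tendsto tendsto_inv_atTop_zero

theorem negLogMoment_isLittleO_succ_left (hij : i + 1 < j) :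
    negLogMoment i j =o[atTop] negLogMoment (i + 1) j := by
  have hbound : negLogMoment i j =O[atTop] fun ξ => i / ξ * negLogMoment (i + 1) j ξ := by
    refine .of_bound 1 ?_
    filter_upwards [eventually_gt_atTop 0] with ξ hξ
    have hrhs := negLogMoment_nonneg (i + 1) j hξ.le
    rw [norm_of_nonneg (negLogMoment_nonneg i j hξ.le), norm_of_nonneg (by positivity), one_mul]
    exact negLogMoment_le_mul_succ_left hij hξ
  have hzero : (fun ξ : ℝ => i / ξ) =o[atTop] fun _ => (1 : ℝ) :=
    (isLittleO_one_iff ℝ).2 (tendsto_const_nhds.div_atTop tendsto_id)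
  simpa using hbound.trans_isLittleO (hzero.mul_isBigO (isBigO_refl (negLogMoment (i + 1) j) _))

theorem negLogMoment_isLittleO {i' : ℕ} (hii' : i < i') (hi'j : i' < j) :
    negLogMoment i j =o[atTop] negLogMoment i' j := by
  induction i', hii' using Nat.le_induction with
  | base => exact negLogMoment_isLittleO_succ_left hi'j
  | succ p _ ih => exact (ih (by omega)).trans (negLogMoment_isLittleO_succ_left hi'j)

end NegLogMoment

theorem hasSum_integral_pow_div {α : Type*} [MeasurableSpace α] {ν : Measure α} {X : α → ℝ}
    (hX : ∀ᵐ x ∂ν, X x ∈ Ico 0 1) (hint : ∀ k : ℕ, Integrable (fun x => X x ^ (k + 1)) ν)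
    (hsum : Summable fun k : ℕ => (∫ x, X x ^ (k + 1) ∂ν) / (k + 1)) :
    HasSum (fun k : ℕ => (∫ x, X x ^ (k + 1) ∂ν) / (k + 1)) (-∫ x, Real.log (1 - X x) ∂ν) := by
  have hnorm (k : ℕ) :
      ∫ x, ‖X x ^ (k + 1) / (k + 1)‖ ∂ν = (∫ x, X x ^ (k + 1) ∂ν) / (k + 1) := by
    rw [← integral_div]
    refine integral_congr_ae (hX.mono fun x hx => norm_of_nonneg ?_)
    exact div_nonneg (pow_nonneg hx.1 _) (by positivity)
  have hseries := hasSum_integral_of_summable_integral_norm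
    (fun k : ℕ => (hint k).div_const ((k : ℝ) + 1)) (hsum.congr fun k => (hnorm k).symm)
  have hlog : ∫ x, ∑' k : ℕ, X x ^ (k + 1) / (k + 1) ∂ν = -∫ x, Real.log (1 - X x) ∂ν := by
    rw [← integral_neg]
    refine integral_congr_ae (hX.mono fun x hx => ?_)
    exact (hasSum_pow_div_log_of_abs_lt_one (abs_lt.2 ⟨by linarith [hx.1], hx.2⟩)).tsum_eq
  simpa only [integral_div, hlog] using hseries

section LogIntegral

variable {N : ℕ} {i j : Fin N} {ξ : ℝ}

theorem ratio_rpow_mem_Ioo {x y : ℝ} (hx : 0 < x) (hxy : x < y) (hξ : 0 < ξ) :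
    (x / y) ^ ξ ∈ Ioo 0 1 :=
  have hy := hx.trans hxy
  ⟨rpow_pos_of_pos (div_pos hx hy) ξ,
    Real.rpow_lt_one (div_pos hx hy).le ((div_lt_one hy).2 hxy) hξ⟩

theorem integral_simplex_log_one_sub_ratio_rpow (hij : i < j) (hξ : 0 < ξ) :
    ∫ g in simplex N, Real.log (1 - (g i / g j) ^ ξ) =
      -(negLogMoment (i + 1) (j + 1) ξ / N.factorial) := by
  have hpow (k : ℕ) : EqOn (fun g : Fin N → ℝ => (g i / g j) ^ ((k + 1) * ξ))
      (fun g => ((g i / g j) ^ ξ) ^ (k + 1)) (simplex N) := fun g hg => by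
    dsimp only
    rw [← rpow_mul_natCast (div_nonneg (hg.2 i).1.le (hg.2 j).1.le), mul_comm]
    push_cast
    rfl
  have hmoment (k : ℕ) : ∫ g in simplex N, ((g i / g j) ^ ξ) ^ (k + 1) =
      ratioMoment (i + 1) (j + 1) ((k + 1) * ξ) / N.factorial := by
    rw [← integral_simplex_ratio_rpow hij (by positivity)]
    exact (setIntegral_congr_fun (measurableSet_simplex N) (hpow k)).symm
  have hmem : ∀ᵐ g ∂volume.restrict (simplex N), (g i / g j) ^ ξ ∈ Ico 0 1 :=
    ae_restrict_of_forall_mem (measurableSet_simplex N) fun g hg =>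
      Ioo_subset_Ico_self (ratio_rpow_mem_Ioo (hg.2 i).1 (hg.1 hij) hξ)
  have hseries : HasSum (fun k : ℕ => (∫ g in simplex N, ((g i / g j) ^ ξ) ^ (k + 1)) / (k + 1))
      (negLogMoment (i + 1) (j + 1) ξ / N.factorial) := by
    have hij' : (i : ℕ) + 1 < j + 1 := Nat.succ_lt_succ hij
    simpa only [hmoment, negLogMoment, div_right_comm] using
      (summable_negLogMoment hij' hξ).hasSum.div_const (N.factorial : ℝ)
  have hlog := hasSum_integral_pow_div hmem (fun k =>
    (integrableOn_simplex_ratio_rpow hij (by positivity)).congr_fun (hpow k)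
      (measurableSet_simplex N)) hseries.summable
  rw [← hlog.unique hseries, neg_neg]

theorem integrableOn_simplex_log_one_sub_ratio_rpow (hij : i < j) (hξ : 0 < ξ) :
    IntegrableOn (fun g => Real.log (1 - (g i / g j) ^ ξ)) (simplex N) := by
  -- A function that is not integrable has Bochner integral `0`.
  refine Integrable.of_integral_ne_zero ?_
  have hpos := negLogMoment_pos (Nat.succ_pos i) (Nat.succ_lt_succ hij) hξ
  rw [integral_simplex_log_one_sub_ratio_rpow hij hξ]
  exact neg_ne_zero.2 (by positivity)

theorem factorial_mul_volume_real_simplex (N : ℕ) :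
    (N.factorial : ℝ) * volume.real (simplex N) = 1 := by
  have hvolume := integral_simplex_prod_rpow (e := 0) (n := N) fun _ _ => by
    simp only [Pi.zero_apply, zero_add, Finset.sum_const, Finset.card_range, nsmul_eq_mul, mul_one]
    positivity
  have hfactorial : ∏ k ∈ Finset.range N, ((k : ℝ) + 1) = N.factorial := by
    rw [← Finset.prod_range_add_one_eq_factorial]
    push_cast
    rfl
  simp only [Pi.zero_apply, rpow_zero, Finset.prod_const_one, setIntegral_const, smul_eq_mul,
    mul_one, zero_add, Finset.sum_const, Finset.card_range, nsmul_eq_mul, Nat.cast_add,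
    Nat.cast_one, Finset.prod_inv_distrib, hfactorial] at hvolume
  rw [hvolume, mul_inv_cancel₀ (by positivity)]

variable {σ : ℝ}

theorem log_gpdQ_sub_gpdQ (μ : ℝ) (hσ : 0 < σ) (hξ : 0 < ξ) {x y : ℝ} (hx : 0 < x) (hxy : x < y) :
    Real.log (gpdQ μ σ ξ x - gpdQ μ σ ξ y) =
      Real.log (σ / ξ) - ξ * Real.log x + Real.log (1 - (x / y) ^ ξ) := by
  have hy : 0 < y := hx.trans hxy
  have hxξ := rpow_pos_of_pos hx ξ
  have := rpow_pos_of_pos hy ξ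
  have hratio : 0 < 1 - (x / y) ^ ξ := sub_pos.2 (ratio_rpow_mem_Ioo hx hxy hξ).2
  have hspacing : gpdQ μ σ ξ x - gpdQ μ σ ξ y = σ / ξ / x ^ ξ * (1 - (x / y) ^ ξ) := by
    rw [gpdQ, gpdQ, if_neg hξ.ne', if_neg hξ.ne', div_rpow hx.le hy.le, rpow_neg hx.le,
      rpow_neg hy.le]
    field
  rw [hspacing, log_mul (by positivity) hratio.ne', log_div (by positivity) hxξ.ne', log_rpow hx]

theorem eqOn_log_gpdQ_sub_gpdQ (μ : ℝ) (hσ : 0 < σ) (hξ : 0 < ξ) (hij : i < j) :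
    EqOn (fun g : Fin N → ℝ => Real.log (gpdQ μ σ ξ (g i) - gpdQ μ σ ξ (g j)))
      (fun g => Real.log (σ / ξ) - ξ * Real.log (g i) + Real.log (1 - (g i / g j) ^ ξ))
      (simplex N) :=
  fun _ hg => log_gpdQ_sub_gpdQ μ hσ hξ (hg.2 i).1 (hg.1 hij)

theorem integrableOn_const_simplex (N : ℕ) (c : ℝ) : IntegrableOn (fun _ => c) (simplex N) := by
  have hfinite : volume (simplex N) ≠ ∞ := fun htop => by
    simpa [Measure.real, htop] using factorial_mul_volume_real_simplex N
  exact integrableOn_const hfinite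

theorem integrableOn_simplex_log_spacing (μ : ℝ) (hσ : 0 < σ) (hξ : 0 < ξ) (hij : i < j) :
    IntegrableOn (fun g => Real.log (gpdQ μ σ ξ (g i) - gpdQ μ σ ξ (g j))) (simplex N) :=
  (((integrableOn_const_simplex N _).sub ((integrableOn_simplex_log i).const_mul ξ)).add
    (integrableOn_simplex_log_one_sub_ratio_rpow hij hξ)).congr_fun
      (eqOn_log_gpdQ_sub_gpdQ μ hσ hξ hij).symm (measurableSet_simplex N)

theorem factorial_mul_integral_log_spacing (μ : ℝ) (hσ : 0 < σ) (hξ : 0 < ξ) (hij : i < j) :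
    (N.factorial : ℝ) *
        ∫ g in simplex N, Real.log (gpdQ μ σ ξ (g i) - gpdQ μ σ ξ (g j)) =
      Real.log (σ / ξ) - ξ * (N.factorial * ∫ g in simplex N, Real.log (g i)) -
        negLogMoment (i + 1) (j + 1) ξ := by
  have hlog := (integrableOn_simplex_log i).const_mul ξ
  have hconst := integrableOn_const_simplex N (Real.log (σ / ξ))
  have hconst_sub_log : IntegrableOn (fun g => Real.log (σ / ξ) - ξ * Real.log (g i))
    (simplex N) := hconst.sub hlog
  rw [setIntegral_congr_fun (measurableSet_simplex N)
      (eqOn_log_gpdQ_sub_gpdQ μ hσ hξ hij),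
    integral_add hconst_sub_log (integrableOn_simplex_log_one_sub_ratio_rpow hij hξ),
    integral_sub hconst hlog, integral_const_mul, setIntegral_const, smul_eq_mul,
    integral_simplex_log_one_sub_ratio_rpow hij hξ]
  have hcancel : (N.factorial : ℝ) * (negLogMoment (i + 1) (j + 1) ξ / N.factorial) =
      negLogMoment (i + 1) (j + 1) ξ := mul_div_cancel₀ _ (by positivity)
  linear_combination Real.log (σ / ξ) * factorial_mul_volume_real_simplex N - hcancel

end LogIntegral

/-- The weighted sum `∑_{1 ≤ i < j ≤ N} a_{ij} f_{ij}`, as a linear functional of the weights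
`a`; for `f_{ij} = log (X_i - X_j)` it is the estimator with weights `a`. -/
noncomputable def weightedSum (N : ℕ) (f : ℕ → ℕ → ℝ) : (ℕ → ℕ → ℝ) →ₗ[ℝ] ℝ where
  toFun a := ∑ i ∈ Finset.Icc 1 N, ∑ j ∈ Finset.Icc (i + 1) N, a i j * f i j
  map_add' a b := by simp only [Pi.add_apply, add_mul, Finset.sum_add_distrib]
  map_smul' c a := by
    simp only [Pi.smul_apply, smul_eq_mul, mul_assoc, Finset.mul_sum, RingHom.id_apply]

theorem weightedSum_apply (N : ℕ) (f a : ℕ → ℕ → ℝ) :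
    weightedSum N f a = ∑ i ∈ Finset.Icc 1 N, ∑ j ∈ Finset.Icc (i + 1) N, a i j * f i j := rfl

/-- The weight matrix of the single log-spacing `log (X_p - X_q)`. -/
def unitWeight (p q : ℕ) : ℕ → ℕ → ℝ := Pi.single p (Pi.single q 1)

theorem unitWeight_apply (p q i j : ℕ) : unitWeight p q i j = if i = p ∧ j = q then 1 else 0 := by
  rw [unitWeight, Pi.single_apply]
  split_ifs <;> simp_all

theorem weightedSum_unitWeight {N p q : ℕ} (hp : 1 ≤ p) (hpq : p < q) (hqN : q ≤ N)
    (f : ℕ → ℕ → ℝ) : weightedSum N f (unitWeight p q) = f p q := by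
  have hp_mem : p ∈ Finset.Icc 1 N := Finset.mem_Icc.2 ⟨hp, by omega⟩
  have hq_mem : q ∈ Finset.Icc (p + 1) N := Finset.mem_Icc.2 ⟨hpq, hqN⟩
  rw [weightedSum_apply, Finset.sum_eq_single_of_mem p hp_mem, Finset.sum_eq_single_of_mem q hq_mem]
  · simp [unitWeight_apply]
  · intro j _ hj
    simp [unitWeight_apply, hj]
  · intro i _ hi
    simp [unitWeight_apply, hi]

theorem eq_sum_smul_unitWeight {N : ℕ} {a : ℕ → ℕ → ℝ}
    (ha : ∀ i j, ¬(1 ≤ i ∧ i < j ∧ j ≤ N) → a i j = 0) :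
    a = ∑ i ∈ Finset.Icc 1 N, ∑ j ∈ Finset.Icc (i + 1) N, a i j • unitWeight i j := by
  funext p q
  simp only [Finset.sum_apply, Pi.smul_apply, smul_eq_mul, unitWeight_apply, mul_ite, mul_one,
    mul_zero, ite_and]
  simp only [Finset.sum_ite_irrel, Finset.sum_const_zero, Finset.sum_ite_eq]
  by_cases hpq : 1 ≤ p ∧ p < q ∧ q ≤ N
  · rw [if_pos (Finset.mem_Icc.2 ⟨hpq.1, by omega⟩),
      if_pos (Finset.mem_Icc.2 ⟨hpq.2.1, hpq.2.2⟩)]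
  · rw [ha p q hpq, ite_self, ite_self]

theorem elemMatrix_succ (i j : ℕ) :
    elemMatrix i (j + 1) = (j : ℝ) • unitWeight i j - ((j : ℝ) - i) • unitWeight i (j + 1) -
      (i : ℝ) • unitWeight (i + 1) (j + 1) := by
  funext p q
  simp only [elemMatrix, unitWeight_apply, Pi.sub_apply, Pi.smul_apply, smul_eq_mul,
    add_tsub_cancel_right, Nat.cast_add, Nat.cast_one]
  split_ifs <;> first | omega | ring

/-- The linear span of the elemental weight matrices of sample size `N`. -/
def elementalSpan (N : ℕ) : Submodule ℝ (ℕ → ℕ → ℝ) :=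
  Submodule.span ℝ {m | ∃ I J, 1 ≤ I ∧ I + 2 ≤ J ∧ J ≤ N ∧ m = elemMatrix I J}

theorem elemMatrix_succ_mem_elementalSpan {N i j : ℕ} (hi : 1 ≤ i) (hij : i < j) (hjN : j < N) :
    elemMatrix i (j + 1) ∈ elementalSpan N :=
  Submodule.subset_span ⟨i, j + 1, hi, by omega, hjN, rfl⟩

theorem weightedSum_eq_zero_of_mem_elementalSpan {N : ℕ} {f : ℕ → ℕ → ℝ}
    (hf : ∀ i j, i < j → j * f i j = (j - i) * f i (j + 1) + i * f (i + 1) (j + 1))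
    {a : ℕ → ℕ → ℝ} (ha : a ∈ elementalSpan N) : weightedSum N f a = 0 := by
  suffices hker : elementalSpan N ≤ LinearMap.ker (weightedSum N f) from hker ha
  refine Submodule.span_le.2 ?_
  rintro _ ⟨i, J, hi, hiJ, hJN, rfl⟩
  obtain ⟨j, rfl⟩ := Nat.exists_eq_add_of_le' (show 1 ≤ J by omega)
  rw [SetLike.mem_coe, LinearMap.mem_ker, elemMatrix_succ]
  simp only [map_sub, map_smul, smul_eq_mul]
  rw [weightedSum_unitWeight hi (by omega) (by omega), weightedSum_unitWeight hi (by omega) hJN,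
    weightedSum_unitWeight (by omega) (by omega) hJN]
  linear_combination hf i j (by omega)

-- `E^{(p,q+1)}` trades the unit weight at `(p, q)` for unit weights in column `q + 1`.
theorem unitWeight_mem_elementalSpan_sup {N p q : ℕ} (hp : 1 ≤ p) (hpq : p < q) (hqN : q ≤ N) :
    unitWeight p q ∈ elementalSpan N ⊔
      Submodule.span ℝ ((unitWeight · N) '' (Finset.Ico 1 N : Set ℕ)) := by
  induction hqN using Nat.decreasingInduction generalizing p with
  | self =>
    exact Submodule.mem_sup_right
      (Submodule.subset_span ⟨p, Finset.mem_coe.2 (Finset.mem_Ico.2 ⟨hp, hpq⟩), rfl⟩)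
  | of_succ q hqN ih =>
    have hq : (q : ℝ) ≠ 0 := Nat.cast_ne_zero.2 (by omega)
    have hsolve : unitWeight p q = (q : ℝ)⁻¹ • (elemMatrix p (q + 1) +
        ((q : ℝ) - p) • unitWeight p (q + 1) + (p : ℝ) • unitWeight (p + 1) (q + 1)) := by
      rw [eq_inv_smul_iff₀ hq, elemMatrix_succ]
      abel
    rw [hsolve]
    have helem := elemMatrix_succ_mem_elementalSpan hp hpq hqN
    exact Submodule.smul_mem _ _ (add_mem (add_mem (Submodule.mem_sup_left helem)
      (Submodule.smul_mem _ _ (ih hp (by omega))))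
      (Submodule.smul_mem _ _ (ih (by omega) (by omega))))

theorem exists_eq_add_sum_smul_unitWeight {N : ℕ} {a : ℕ → ℕ → ℝ}
    (ha : ∀ i j, ¬(1 ≤ i ∧ i < j ∧ j ≤ N) → a i j = 0) :
    ∃ x ∈ elementalSpan N, ∃ b : ℕ → ℝ, a = x + ∑ p ∈ Finset.Ico 1 N, b p • unitWeight p N := by
  have hmem : a ∈ elementalSpan N ⊔
      Submodule.span ℝ ((unitWeight · N) '' (Finset.Ico 1 N : Set ℕ)) := by
    rw [eq_sum_smul_unitWeight ha]
    refine sum_mem fun i hi => sum_mem fun j hj => Submodule.smul_mem _ _ ?_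
    rw [Finset.mem_Icc] at hi hj
    exact unitWeight_mem_elementalSpan_sup hi.1 hj.1 hj.2
  obtain ⟨x, hx, y, hy, rfl⟩ := Submodule.mem_sup.1 hmem
  obtain ⟨b, rfl⟩ := (Submodule.mem_span_image_finset_iff_exists_fun' ℝ).1 hy
  exact ⟨x, hx, b, rfl⟩

theorem mem_elementalSpan_of_frequently_weightedSum_eq_zero {N : ℕ} {a : ℕ → ℕ → ℝ}
    (ha : ∀ i j, ¬(1 ≤ i ∧ i < j ∧ j ≤ N) → a i j = 0)
    (h : ∃ᶠ ξ in atTop, weightedSum N (fun i j => negLogMoment i j ξ) a = 0) :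
    a ∈ elementalSpan N := by
  obtain ⟨x, hx, b, rfl⟩ := exists_eq_add_sum_smul_unitWeight ha
  have hcolumn : ∃ᶠ ξ in atTop, ∑ p ∈ Finset.Ico 1 N, b p * negLogMoment p N ξ = 0 := by
    refine (h.and_eventually (eventually_gt_atTop 0)).mono fun ξ ⟨hzero, hξ⟩ => ?_
    rw [map_add, weightedSum_eq_zero_of_mem_elementalSpan
      (fun i j hij => negLogMoment_recurrence hij hξ) hx, zero_add, map_sum] at hzero
    rw [← hzero]
    refine Finset.sum_congr rfl fun p hp => ?_
    rw [Finset.mem_Ico] at hp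
    rw [map_smul, weightedSum_unitWeight hp.1 hp.2 le_rfl, smul_eq_mul]
  have hb : ∀ p ∈ Finset.Ico 1 N, b p = 0 := by
    refine eq_zero_of_frequently_sum_mul_eq_zero _ (fun i _ j hj hij =>
      negLogMoment_isLittleO hij (Finset.mem_Ico.1 hj).2) (fun p hp => ?_) hcolumn
    rw [Finset.mem_Ico] at hp
    filter_upwards [eventually_gt_atTop 0] with ξ hξ
    exact (negLogMoment_pos hp.1 hp.2 hξ).ne'
  rwa [Finset.sum_eq_zero fun p hp => by rw [hb p hp, zero_smul], add_zero]

section Estimator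

variable {N : ℕ} {σ ξ : ℝ}

theorem sample_add_one (u : ℝ → ℝ) (g : Fin N → ℝ) (i : Fin N) :
    sample N u g (i + 1) = u (g i) := by
  simp [sample]

theorem exists_fin_add_one_eq {i : ℕ} (hi : 1 ≤ i) (hiN : i ≤ N) : ∃ k : Fin N, (k : ℕ) + 1 = i :=
  ⟨⟨i - 1, by omega⟩, Nat.sub_add_cancel hi⟩

theorem integrableOn_log_sample_sub_sample (μ : ℝ) (hσ : 0 < σ) (hξ : 0 < ξ) {i j : ℕ}
    (hi : 1 ≤ i) (hij : i < j) (hjN : j ≤ N) :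
    IntegrableOn (fun g => Real.log (sample N (gpdQ μ σ ξ) g i - sample N (gpdQ μ σ ξ) g j))
      (simplex N) := by
  obtain ⟨i, rfl⟩ := exists_fin_add_one_eq hi (hij.le.trans hjN)
  obtain ⟨j, rfl⟩ := exists_fin_add_one_eq (by omega) hjN
  simpa only [sample_add_one] using
    integrableOn_simplex_log_spacing μ hσ hξ (Nat.succ_lt_succ_iff.1 hij)

theorem factorial_mul_integral_log_sample_sub_sample (μ : ℝ) (hσ : 0 < σ) (hξ : 0 < ξ) {i j : ℕ}
    (hi : 1 ≤ i) (hij : i < j) (hjN : j ≤ N) :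
    (N.factorial : ℝ) * ∫ g in simplex N,
        Real.log (sample N (gpdQ μ σ ξ) g i - sample N (gpdQ μ σ ξ) g j) =
      Real.log (σ / ξ) - ξ * (N.factorial * ∫ g in simplex N, Real.log (sample N id g i)) -
        negLogMoment i j ξ := by
  obtain ⟨i, rfl⟩ := exists_fin_add_one_eq hi (hij.le.trans hjN)
  obtain ⟨j, rfl⟩ := exists_fin_add_one_eq (by omega) hjN
  simpa only [sample_add_one, id] using
    factorial_mul_integral_log_spacing μ hσ hξ (Nat.succ_lt_succ_iff.1 hij)

theorem factorial_mul_integral_logSpacing_sum (μ : ℝ) (hσ : 0 < σ) (hξ : 0 < ξ)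
    (a : ℕ → ℕ → ℝ) :
    (N.factorial : ℝ) * ∫ g in simplex N,
        ∑ i ∈ Finset.Icc 1 N, ∑ j ∈ Finset.Icc (i + 1) N,
          a i j * Real.log (sample N (gpdQ μ σ ξ) g i - sample N (gpdQ μ σ ξ) g j) =
      weightedSum N 1 a * Real.log (σ / ξ) -
        ξ * weightedSum N
          (fun i _ => N.factorial * ∫ g in simplex N, Real.log (sample N id g i)) a -
        weightedSum N (fun i j => negLogMoment i j ξ) a := by
  have hint : ∀ i ∈ Finset.Icc 1 N, ∀ j ∈ Finset.Icc (i + 1) N, IntegrableOn (fun g =>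
      a i j * Real.log (sample N (gpdQ μ σ ξ) g i - sample N (gpdQ μ σ ξ) g j)) (simplex N) :=
    fun i hi j hj => (integrableOn_log_sample_sub_sample μ hσ hξ (Finset.mem_Icc.1 hi).1
      (Finset.mem_Icc.1 hj).1 (Finset.mem_Icc.1 hj).2).const_mul _
  rw [integral_finsetSum _ fun i hi => integrable_finsetSum _ (hint i hi)]
  simp only [weightedSum_apply, Finset.mul_sum, Finset.sum_mul, ← Finset.sum_sub_distrib]
  refine Finset.sum_congr rfl fun i hi => ?_
  rw [integral_finsetSum _ (hint i hi), Finset.mul_sum]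
  refine Finset.sum_congr rfl fun j hj => ?_
  rw [Finset.mem_Icc] at hi hj
  rw [integral_const_mul, mul_left_comm,
    factorial_mul_integral_log_sample_sub_sample μ hσ hξ hi.1 hj.1 hj.2, Pi.one_apply, Pi.one_apply]
  ring

theorem tendsto_weightedSum_negLogMoment (N : ℕ) (a : ℕ → ℕ → ℝ) :
    Tendsto (fun ξ => weightedSum N (fun i j => negLogMoment i j ξ) a) atTop (𝓝 0) := by
  have hsum : Tendsto (fun ξ => ∑ i ∈ Finset.Icc 1 N, ∑ j ∈ Finset.Icc (i + 1) N,
      a i j * negLogMoment i j ξ) atTop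
      (𝓝 (∑ i ∈ Finset.Icc 1 N, ∑ j ∈ Finset.Icc (i + 1) N, a i j * 0)) :=
    tendsto_finsetSum _ fun i _ => tendsto_finsetSum _ fun j hj =>
      (tendsto_negLogMoment (Finset.mem_Icc.1 hj).1).const_mul (a i j)
  simp only [mul_zero, Finset.sum_const_zero] at hsum
  exact hsum

end Estimator

theorem elementals_complete_general (N : ℕ) (μ : ℝ) {σ : ℝ} (hσ : 0 < σ) (a : ℕ → ℕ → ℝ)
    (ha : ∀ i j, ¬(1 ≤ i ∧ i < j ∧ j ≤ N) → a i j = 0)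
    (hunbiased : ∃ᶠ ξ in atTop, (N.factorial : ℝ) *
      ∫ g in simplex N, ∑ i ∈ Finset.Icc 1 N, ∑ j ∈ Finset.Icc (i + 1) N,
        a i j * Real.log (sample N (gpdQ μ σ ξ) g i - sample N (gpdQ μ σ ξ) g j) = ξ) :
    a ∈ elementalSpan N := by
  set A := weightedSum N
    (fun i _ => N.factorial * ∫ g in simplex N, Real.log (sample N id g i)) a with hA
  have hexpansion : ∃ᶠ ξ in atTop, weightedSum N (fun i j => negLogMoment i j ξ) a +
      weightedSum N 1 a * Real.log (ξ / σ) + (A + 1) * ξ = 0 := by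
    refine (hunbiased.and_eventually (eventually_gt_atTop 0)).mono fun ξ ⟨hmean, hξ⟩ => ?_
    rw [factorial_mul_integral_logSpacing_sum μ hσ hξ, ← inv_div ξ σ, log_inv, ← hA] at hmean
    linear_combination -hmean
  obtain ⟨hlog, hlinear⟩ := coeffs_eq_zero_of_frequently_add_log_add_linear hσ
    (tendsto_weightedSum_negLogMoment N a) hexpansion
  refine mem_elementalSpan_of_frequently_weightedSum_eq_zero ha (hexpansion.mono fun ξ hξ => ?_)
  rwa [hlog, hlinear, zero_mul, zero_mul, add_zero, add_zero] at hξ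

/-- Completeness: every location- and scale-invariant, absolutely unbiased estimator of
the GPD tail parameter that is a linear combination of log-spacings is a linear
combination of elementals. -/
theorem elementals_complete (N : ℕ) (hN : 3 ≤ N) (μ σ : ℝ) (hσ : 0 < σ)
    (a : ℕ → ℕ → ℝ) (ha : ∀ i j, ¬(1 ≤ i ∧ i < j ∧ j ≤ N) → a i j = 0)
    (ha0 : ∑ i ∈ Finset.Icc 1 N, ∑ j ∈ Finset.Icc (i + 1) N, a i j = 0)
    (hunbiased : ∀ ξ : ℝ, ξ ≠ 0 →
      IntegrableOn
        (fun g => ∑ i ∈ Finset.Icc 1 N, ∑ j ∈ Finset.Icc (i + 1) N,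
          a i j * Real.log (sample N (gpdQ μ σ ξ) g i - sample N (gpdQ μ σ ξ) g j))
        (simplex N) volume ∧
      (N.factorial : ℝ) *
        ∫ g in simplex N, ∑ i ∈ Finset.Icc 1 N, ∑ j ∈ Finset.Icc (i + 1) N,
          a i j * Real.log (sample N (gpdQ μ σ ξ) g i - sample N (gpdQ μ σ ξ) g j) = ξ) :
    a ∈ Submodule.span ℝ
      {m : ℕ → ℕ → ℝ | ∃ I J, 1 ≤ I ∧ I + 2 ≤ J ∧ J ≤ N ∧ m = elemMatrix I J} :=
  elementals_complete_general N μ hσ a ha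
    ((eventually_ne_atTop 0).frequently.mono fun ξ hξ => (hunbiased ξ hξ).2)
end

section
/- Let N ≥ 3. Then ∑_{J=3}^{N} (J−2)(N+1−J) = N(N−1)(N−2)/6. Moreover, setting r_{IJ} = 6(N+1−J)/(N(N−1)(N−2)) for each pair (I,J) with 1 ≤ I and I+2 ≤ J ≤ N (so that ∑_{I,J} r_{IJ} = 1), the matrix A = ∑_{I,J} r_{IJ}·E^{(I,J)} has entries A_{ij} = 6(2N − 3j + 2)/(N(N−1)(N−2)) for every 1 ≤ i < j ≤ N, and A_{ij} = 0 otherwise; in particular ∑_{1 ≤ i < j ≤ N} A_{ij} = 0. -/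
open Finset

theorem sum_range_add_one_mul_sub (n : ℕ) :
    ∑ k ∈ range n, (k + 1) * (n - k) = (n + 2).choose 3 := by
  induction n with
  | zero => rfl
  | succ n ih =>
    have hstep : ∀ k ∈ range n, (k + 1) * (n + 1 - k) = (k + 1) * (n - k) + (k + 1) := by
      intro k hk
      rw [Nat.sub_add_comm (mem_range.1 hk).le, mul_add_one]
    have hlinear : ∑ k ∈ range (n + 1), (k + 1) = (n + 2).choose 2 := by
      simpa using Nat.sum_range_add_choose n 1
    calc ∑ k ∈ range (n + 1), (k + 1) * (n + 1 - k)
        = ∑ k ∈ range n, (k + 1) * (n - k) + ∑ k ∈ range (n + 1), (k + 1) := by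
          rw [sum_range_succ, sum_congr rfl hstep, sum_add_distrib, sum_range_succ (fun k => k + 1)]
          simp [add_assoc]
      _ = (n + 3).choose 3 := by
          rw [ih, hlinear, add_comm, ← Nat.choose_succ_succ']

theorem choose_three_right (n : ℕ) : n.choose 3 = n * (n - 1) * (n - 2) / 6 := by
  rw [Nat.choose_eq_descFactorial_div_factorial]
  simp [Nat.descFactorial, Nat.factorial, mul_comm]

theorem cast_choose_three (K : Type*) [Field K] [CharZero K] (n : ℕ) :
    (n.choose 3 : K) = n * (n - 1) * (n - 2) / 6 := by
  induction n with
  | zero => simp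
  | succ n ih =>
    rw [Nat.choose_succ_succ', Nat.cast_add, ih, Nat.cast_choose_two, Nat.cast_add_one]
    ring

theorem sum_Icc_sub_two_mul_sub (N : ℕ) :
    ∑ J ∈ Icc 3 N, (J - 2) * (N + 1 - J) = N.choose 3 := by
  rcases lt_or_ge N 2 with hN | hN
  · rw [Icc_eq_empty (by omega), sum_empty, Nat.choose_eq_zero_of_lt (by omega)]
  obtain ⟨n, rfl⟩ := Nat.exists_eq_add_of_le' hN
  rw [← sum_range_add_one_mul_sub, ← Ico_add_one_right_eq_Icc, sum_Ico_eq_sum_range]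
  exact sum_congr rfl fun k _ => congrArg₂ _ (by omega) (by omega)

theorem sum_Icc_sum_Icc_add_two {M : Type*} [AddCommMonoid M] (N : ℕ) (f : ℕ → M) :
    ∑ I ∈ Icc 1 N, ∑ J ∈ Icc (I + 2) N, f J = ∑ J ∈ Icc 3 N, (J - 2) • f J := by
  rw [sum_comm' (t' := Icc 3 N) (s' := fun J => Icc 1 (J - 2))
    (fun I J => by simp only [mem_Icc]; omega)]
  simp

theorem sum_sum_ite_eq_and_eq {α β M : Type*} [DecidableEq α] [DecidableEq β] [AddCommMonoid M]
    (s : Finset α) (t : α → Finset β) (a : α) (b : β) (f : α → β → M) :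
    ∑ x ∈ s, ∑ y ∈ t x, (if x = a ∧ y = b then f x y else 0) =
      if a ∈ s ∧ b ∈ t a then f a b else 0 := by
  have hinner (x : α) : ∑ y ∈ t x, (if x = a ∧ y = b then f x y else 0) =
      if x = a then if b ∈ t a then f a b else 0 else 0 := by
    by_cases hx : x = a <;> simp [hx]
  simp_rw [hinner, sum_ite_eq', ite_and]

section ElementalMatrix

variable {N I J i j : ℕ}

theorem elemMatrix_apply (hJ : 0 < J) :
    elemMatrix I J i j =
      (if i = I ∧ j = J - 1 then (J : ℝ) - 1 else 0) -
        (if i = I ∧ j = J then (J : ℝ) - 1 - I else 0) -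
        (if i = I + 1 ∧ j = J then (I : ℝ) else 0) := by
  unfold elemMatrix
  split_ifs <;> first | omega | simp

theorem elemMatrix_eq_zero (hI : 1 ≤ I) (hIJ : I + 2 ≤ J) (hJ : J ≤ N)
    (hij : ¬(1 ≤ i ∧ i < j ∧ j ≤ N)) : elemMatrix I J i j = 0 := by
  unfold elemMatrix
  rw [if_neg (by omega), if_neg (by omega), if_neg (by omega)]

theorem sum_elemMatrix (hI : 1 ≤ I) (hIJ : I + 2 ≤ J) (hJ : J ≤ N) :
    ∑ i ∈ Icc 1 N, ∑ j ∈ Icc (i + 1) N, elemMatrix I J i j = 0 := by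
  simp only [elemMatrix_apply (show 0 < J by omega), sum_sub_distrib, sum_sum_ite_eq_and_eq,
    mem_Icc]
  rw [if_pos (by omega), if_pos (by omega), if_pos (by omega)]
  ring

end ElementalMatrix

/-- The matrix of log-spacing weights induced by a combination of elemental estimators, where
`r I J` is the coefficient of `E^{(I,J)}`; values of `r` outside `1 ≤ I`, `I + 2 ≤ J ≤ N` are
ignored. -/
noncomputable def inducedMatrix (N : ℕ) (r : ℕ → ℕ → ℝ) : ℕ → ℕ → ℝ :=
  ∑ I ∈ Icc 1 N, ∑ J ∈ Icc (I + 2) N, r I J • elemMatrix I J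

section InducedMatrix

variable {N i j : ℕ}

theorem inducedMatrix_apply (r : ℕ → ℕ → ℝ) :
    inducedMatrix N r i j =
      ∑ I ∈ Icc 1 N, ∑ J ∈ Icc (I + 2) N, r I J * elemMatrix I J i j := by
  simp only [inducedMatrix, Finset.sum_apply, Pi.smul_apply, smul_eq_mul]

theorem inducedMatrix_eq_zero (r : ℕ → ℕ → ℝ) (hij : ¬(1 ≤ i ∧ i < j ∧ j ≤ N)) :
    inducedMatrix N r i j = 0 := by
  rw [inducedMatrix_apply]
  refine sum_eq_zero fun I hI => sum_eq_zero fun J hJ => ?_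
  rw [mem_Icc] at hI hJ
  rw [elemMatrix_eq_zero hI.1 hJ.1 hJ.2 hij, mul_zero]

theorem inducedMatrix_apply_of_lt (r : ℕ → ℕ → ℝ) (hi : 1 ≤ i) (hij : i < j) (hj : j ≤ N) :
    inducedMatrix N r i j =
      (if j < N then r i (j + 1) * j else 0) - r i j * (j - 1 - i) - r (i - 1) j * (i - 1) := by
  obtain ⟨k, rfl⟩ := Nat.exists_eq_add_of_le' hi
  have hterm : ∀ I ∈ Icc 1 N, ∀ J ∈ Icc (I + 2) N, r I J * elemMatrix I J (k + 1) j =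
      (if I = k + 1 ∧ J = j + 1 then r I J * (J - 1) else 0) -
        (if I = k + 1 ∧ J = j then r I J * (J - 1 - I) else 0) -
        (if I = k ∧ J = j then r I J * I else 0) := by
    intro I _ J hJ
    have hJ₀ : 0 < J := by rw [mem_Icc] at hJ; omega
    have hleft : k + 1 = I ∧ j = J - 1 ↔ I = k + 1 ∧ J = j + 1 := by omega
    have hdiag : k + 1 = I ∧ j = J ↔ I = k + 1 ∧ J = j := by omega
    have hup : k + 1 = I + 1 ∧ j = J ↔ I = k ∧ J = j := by omega
    rw [elemMatrix_apply hJ₀, mul_sub, mul_sub]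
    simp only [hleft, hdiag, hup, mul_ite, mul_zero]
  -- The absent pairs `J = I + 1` and `I = 0` would enter with coefficient zero.
  have hmiddle : (if k + 1 ∈ Icc 1 N ∧ j ∈ Icc (k + 1 + 2) N then
      r (k + 1) j * (j - 1 - (k + 1 : ℕ)) else 0) = r (k + 1) j * (j - 1 - (k + 1 : ℕ)) := by
    rcases (Nat.succ_le_of_lt hij).eq_or_lt with rfl | hlt
    · simp
    · exact if_pos (by simp only [mem_Icc]; omega)
  have hbelow : (if k ∈ Icc 1 N ∧ j ∈ Icc (k + 2) N then r k j * k else 0) = r k j * k := by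
    rcases k.eq_zero_or_pos with rfl | hk
    · simp
    · exact if_pos (by simp only [mem_Icc]; omega)
  have hright : k + 1 ∈ Icc 1 N ∧ j + 1 ∈ Icc (k + 1 + 2) N ↔ j < N := by
    simp only [mem_Icc]; omega
  rw [inducedMatrix_apply, sum_congr rfl fun I hI => sum_congr rfl (hterm I hI)]
  simp only [sum_sub_distrib, sum_sum_ite_eq_and_eq, hmiddle, hbelow, hright]
  simp

theorem inducedMatrix_const_apply_of_lt (f : ℕ → ℝ) (hi : 1 ≤ i) (hij : i < j) (hj : j ≤ N) :
    inducedMatrix N (fun _ => f) i j =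
      (if j < N then f (j + 1) * j else 0) - f j * (j - 2) := by
  rw [inducedMatrix_apply_of_lt _ hi hij hj]
  ring

theorem sum_inducedMatrix (N : ℕ) (r : ℕ → ℕ → ℝ) :
    ∑ i ∈ Icc 1 N, ∑ j ∈ Icc (i + 1) N, inducedMatrix N r i j = 0 := by
  simp only [inducedMatrix_apply, sum_sigma' (Icc 1 N) fun I => Icc (I + 2) N]
  rw [sum_sigma', sum_comm]
  refine sum_eq_zero fun p hp => ?_
  simp only [mem_sigma, mem_Icc] at hp
  rw [← mul_sum, ← sum_sigma' _ _ fun i j => elemMatrix p.1 p.2 i j,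
    sum_elemMatrix hp.1.1 hp.2.1 hp.2.2, mul_zero]

end InducedMatrix

/-- The normalised weights `r_{IJ} ∝ N + 1 - J` of the linearly-rising combination. -/
noncomputable def linearlyRisingWeight (N J : ℕ) : ℝ :=
  6 * ((N : ℝ) + 1 - J) / (N * ((N : ℝ) - 1) * ((N : ℝ) - 2))

theorem sum_linearlyRisingWeight {N : ℕ} (hN : 3 ≤ N) :
    ∑ I ∈ Icc 1 N, ∑ J ∈ Icc (I + 2) N, linearlyRisingWeight N J = 1 := by
  have hterm : ∀ J ∈ Icc 3 N, (J - 2) • linearlyRisingWeight N J =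
      6 / (N * ((N : ℝ) - 1) * ((N : ℝ) - 2)) * ((J - 2) * (N + 1 - J) : ℕ) := by
    intro J hJ
    have hJN : J ≤ N + 1 := by rw [mem_Icc] at hJ; omega
    rw [nsmul_eq_mul, linearlyRisingWeight, Nat.cast_mul, Nat.cast_sub hJN, Nat.cast_add_one]
    ring
  have hN' : (3 : ℝ) ≤ N := by exact_mod_cast hN
  have h₁ : (N : ℝ) - 1 ≠ 0 := by linarith
  have h₂ : (N : ℝ) - 2 ≠ 0 := by linarith
  calc ∑ I ∈ Icc 1 N, ∑ J ∈ Icc (I + 2) N, linearlyRisingWeight N J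
      = ∑ J ∈ Icc 3 N, (J - 2) • linearlyRisingWeight N J := sum_Icc_sum_Icc_add_two N _
    _ = 6 / (N * ((N : ℝ) - 1) * ((N : ℝ) - 2)) * N.choose 3 := by
      rw [sum_congr rfl hterm, ← mul_sum, ← Nat.cast_sum, sum_Icc_sub_two_mul_sub]
    _ = 1 := by rw [cast_choose_three]; field_simp

theorem inducedMatrix_linearlyRisingWeight {N i j : ℕ} (hi : 1 ≤ i) (hij : i < j) (hj : j ≤ N) :
    inducedMatrix N (fun _ => linearlyRisingWeight N) i j =
      6 * (2 * (N : ℝ) - 3 * j + 2) / (N * ((N : ℝ) - 1) * ((N : ℝ) - 2)) := by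
  have hright : (if j < N then linearlyRisingWeight N (j + 1) * j else 0) =
      linearlyRisingWeight N (j + 1) * j := by
    rcases hj.eq_or_lt with rfl | hlt
    · simp [linearlyRisingWeight]
    · exact if_pos hlt
  rw [inducedMatrix_const_apply_of_lt _ hi hij hj, hright]
  simp only [linearlyRisingWeight, Nat.cast_add_one]
  ring

/-- The paper's "linearly-rising" combination: `∑_{J=3}^N (J−2)(N+1−J) = N(N−1)(N−2)/6`;
the weights `r_{IJ} = 6(N+1−J)/(N(N−1)(N−2))` sum to `1`; the induced matrix
`A = ∑_{I,J} r_{IJ} E^{(I,J)}` of log-spacing weights has entries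
`A_{ij} = 6(2N−3j+2)/(N(N−1)(N−2))` for `1 ≤ i < j ≤ N` and `0` otherwise; and the
entries of `A` sum to zero. -/
theorem linearly_rising_combination (N : ℕ) (hN : 3 ≤ N) :
    (∑ J ∈ Finset.Icc 3 N, (J - 2) * (N + 1 - J) = N * (N - 1) * (N - 2) / 6) ∧
    (∑ I ∈ Finset.Icc 1 N, ∑ J ∈ Finset.Icc (I + 2) N,
        6 * ((N : ℝ) + 1 - (J : ℝ)) / ((N : ℝ) * ((N : ℝ) - 1) * ((N : ℝ) - 2)) = 1) ∧
    (∀ i j : ℕ,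
      (∑ I ∈ Finset.Icc 1 N, ∑ J ∈ Finset.Icc (I + 2) N,
          (6 * ((N : ℝ) + 1 - (J : ℝ)) / ((N : ℝ) * ((N : ℝ) - 1) * ((N : ℝ) - 2)))
            • elemMatrix I J) i j =
        if 1 ≤ i ∧ i < j ∧ j ≤ N then
          6 * (2 * (N : ℝ) - 3 * (j : ℝ) + 2) / ((N : ℝ) * ((N : ℝ) - 1) * ((N : ℝ) - 2))
        else 0) ∧
    ∑ i ∈ Finset.Icc 1 N, ∑ j ∈ Finset.Icc (i + 1) N,
      (∑ I ∈ Finset.Icc 1 N, ∑ J ∈ Finset.Icc (I + 2) N,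
        (6 * ((N : ℝ) + 1 - (J : ℝ)) / ((N : ℝ) * ((N : ℝ) - 1) * ((N : ℝ) - 2)))
          • elemMatrix I J) i j = 0 := by
  refine ⟨?_, sum_linearlyRisingWeight hN, fun i j => ?_, sum_inducedMatrix N _⟩
  · rw [sum_Icc_sub_two_mul_sub, choose_three_right]
  · change inducedMatrix N (fun _ => linearlyRisingWeight N) i j = _
    split_ifs with hij
    · exact inducedMatrix_linearlyRisingWeight hij.1 hij.2.1 hij.2.2
    · exact inducedMatrix_eq_zero _ hij
end
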